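/- arXiv:1809.05247 — 6 statements merged into one kernel-verified Lean document; each statement's English description precedes it below -/
import Mathlib

section
/- Let β > 0, κ > 0, W > 0 and let (e_r)_{r≥0} be a sequence of nonnegative real numbers such that for every r ≥ 0: if e_r ≤ (β/κ)·W², then e_{r+1} ≤ e_r − (κ/(2βW²))·e_r², and otherwise e_{r+1} ≤ e_r − (β/(2κ))·W². Set c = ⌈2κ·e_0/(β·W²)⌉. Then for every integer R with R > c, one has e_R ≤ 2βW²/(κ·(R − c)). (This is the deterministic quantitative core of Theorem 1: R grids with at least κ expected non-empty bins per grid yield suboptimality decaying at rate O(1/(κR)).) -/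
theorem aux_rate (u : ℕ → ℝ) (h0 : ∀ r, 0 ≤ u r)
    (h1 : ∀ r, u r ≤ 1 / 2 → u (r + 1) ≤ u r - u r ^ 2)
    (h2 : ∀ r, ¬ u r ≤ 1 / 2 → u (r + 1) ≤ u r - 1 / 4)
    (c : ℕ) (hc : 4 * u 0 ≤ c) (k : ℕ) : u (c + k) * (k + 2) ≤ 1 := by
  have key : ∀ r : ℕ, u r ≤ 1 / 2 ∨ u r ≤ u 0 - r / 4 := by
    intro r
    induction r with
    | zero => right; simp
    | succ n ih =>
      by_cases h : u n ≤ 1 / 2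
      · left
        nlinarith [h1 n h, sq_nonneg (u n)]
      · right
        have := h2 n h
        rcases ih with ih | ih
        · exact absurd ih h
        · push_cast
          linarith
  induction k with
  | zero =>
    have := key c
    simp only [Nat.cast_zero, add_zero]
    rcases this with h | h <;> linarith
  | succ n ih =>
    have hn : (0 : ℝ) ≤ n := Nat.cast_nonneg n
    have hp := h0 (c + n)
    have hu : u (c + n) ≤ 1 / 2 := by nlinarith [mul_nonneg hp hn]
    have hs := h1 _ hu
    rw [← add_assoc]
    push_cast
    have a1 : u (c + n + 1) * (n + 1 + 2) ≤ (u (c + n) - u (c + n) ^ 2) * (n + 1 + 2) :=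
      mul_le_mul_of_nonneg_right hs (by linarith)
    have a2 : 0 ≤ (1 - u (c + n) * (n + 2)) * (1 - u (c + n)) :=
      mul_nonneg (by linarith) (by linarith)
    nlinarith [sq_nonneg (u (c + n))]

/-- Deterministic quantitative core of Theorem 1: a nonnegative sequence with
quadratic descent when small and constant descent when large decays at rate
`O(1/(κ R))`. -/
theorem stmt_0 (β κ W : ℝ) (hβ : 0 < β) (hκ : 0 < κ) (hW : 0 < W)
    (e : ℕ → ℝ) (he_nonneg : ∀ r, 0 ≤ e r)
    (hdesc : ∀ r, (e r ≤ (β / κ) * W ^ 2 →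
        e (r + 1) ≤ e r - (κ / (2 * β * W ^ 2)) * (e r) ^ 2) ∧
      (¬ e r ≤ (β / κ) * W ^ 2 →
        e (r + 1) ≤ e r - (β / (2 * κ)) * W ^ 2))
    (c : ℕ) (hc : c = ⌈2 * κ * e 0 / (β * W ^ 2)⌉₊) :
    ∀ R : ℕ, c < R → e R ≤ 2 * β * W ^ 2 / (κ * ((R : ℝ) - (c : ℝ))) := by
  intro R hR
  obtain ⟨A, hA⟩ : ∃ A, A = β * W ^ 2 / κ := ⟨_, rfl⟩
  have hApos : 0 < A := by rw [hA]; positivity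
  have e1 : β / κ * W ^ 2 = A := by rw [hA]; ring
  have e2 : κ / (2 * β * W ^ 2) = 1 / (2 * A) := by rw [hA]; field_simp
  have e3 : β / (2 * κ) * W ^ 2 = A / 2 := by rw [hA]; field_simp
  have e4 : 2 * κ * e 0 / (β * W ^ 2) = 4 * (e 0 / (2 * A)) := by rw [hA]; field_simp; ring
  rw [e1, e2, e3] at hdesc
  have hiff : ∀ r, e r / (2 * A) ≤ 1 / 2 ↔ e r ≤ A := by
    intro r
    rw [div_le_iff₀ (by positivity)]
    constructor <;> intro h <;> linarith
  have main := aux_rate (fun r => e r / (2 * A)) (fun r => by have := he_nonneg r; positivity)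
    (fun r h => by
      have := (hdesc r).1 ((hiff r).1 h)
      change e (r + 1) / (2 * A) ≤ e r / (2 * A) - (e r / (2 * A)) ^ 2
      rw [div_le_iff₀ (by positivity)]
      refine this.trans (le_of_eq ?_)
      field_simp)
    (fun r h => by
      have := (hdesc r).2 (fun h' => h ((hiff r).2 h'))
      change e (r + 1) / (2 * A) ≤ e r / (2 * A) - 1 / 4
      rw [div_le_iff₀ (by positivity)]
      refine this.trans (le_of_eq ?_)
      field_simp
      ring)
    c (by
      change 4 * (e 0 / (2 * A)) ≤ c
      rw [← e4, hc]
      exact Nat.le_ceil _) (R - c)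
  simp only [Nat.add_sub_cancel' hR.le] at main
  rw [Nat.cast_sub hR.le] at main
  have hd : (0 : ℝ) < (R : ℝ) - c := sub_pos.2 (by exact_mod_cast hR)
  have e5 : 2 * β * W ^ 2 / (κ * ((R : ℝ) - (c : ℝ))) = 2 * A / ((R : ℝ) - c) := by
    rw [hA]; field_simp
  rw [e5, le_div_iff₀ hd]
  rw [div_mul_eq_mul_div, div_le_iff₀ (by positivity)] at main
  nlinarith [he_nonneg R]
end

section
/- Let N, D be positive integers, β > 0 and ν > 0. Let z_1, …, z_N ∈ ℝ^D with all entries in {0,1}, and let B ⊆ {1,…,D} be a block of coordinates such that (i) each sample z_i has at most one nonzero coordinate with index in B, and (ii) for every j ∈ B, the number of samples i with z_{ij} = 1 is at most ν·N. Let L_1, …, L_N : ℝ → ℝ be differentiable functions satisfying L_i(b) ≤ L_i(a) + L_i'(a)·(b − a) + (β/2)·(b − a)² for all a, b ∈ ℝ, and define Loss(w) = (1/N)∑_{i=1}^N L_i(⟨w, z_i⟩). Then for every w ∈ ℝ^D and every η ∈ ℝ^D supported on B (η_j = 0 for j ∉ B), one has Loss(w + η) − Loss(w) ≤ ∑_{j∈B}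 (∂Loss/∂w_j)(w)·η_j + (βν/2)·∑_{j∈B} η_j². -/
open Finset in
/-- Block-wise quadratic upper bound (inequality (11)) for Random Binning
features: if every sample has at most one nonzero binary feature in the block
`B` and every column of `B` has at most `νN` nonzeros, then the smooth loss
admits a block upper bound with curvature `βν`. -/
theorem stmt_5 (N D : ℕ) (hN : 0 < N) (hD : 0 < D) (β ν : ℝ)
    (hβ : 0 < β) (hν : 0 < ν)
    (z : Fin N → Fin D → ℝ)
    (hz01 : ∀ i j, z i j = 0 ∨ z i j = 1)
    (B : Finset (Fin D))
    (hone : ∀ i, (B.filter (fun j => z i j ≠ 0)).card ≤ 1)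
    (hcol : ∀ j ∈ B, ((univ.filter (fun i : Fin N => z i j = 1)).card : ℝ) ≤ ν * N)
    (L : Fin N → ℝ → ℝ)
    (hLdiff : ∀ i, Differentiable ℝ (L i))
    (hLsmooth : ∀ i a b, L i b ≤ L i a + deriv (L i) a * (b - a) + β / 2 * (b - a) ^ 2)
    (Loss : (Fin D → ℝ) → ℝ)
    (hLoss : ∀ w, Loss w = (1 / (N : ℝ)) * ∑ i, L i (∑ j, w j * z i j))
    (grad : (Fin D → ℝ) → Fin D → ℝ)
    (hgrad : ∀ w j, grad w j = (1 / (N : ℝ)) * ∑ i, deriv (L i) (∑ j', w j' * z i j') * z i j) :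
    ∀ w η : Fin D → ℝ, (∀ j ∉ B, η j = 0) →
      Loss (w + η) - Loss w ≤
        ∑ j ∈ B, grad w j * η j + β * ν / 2 * ∑ j ∈ B, (η j) ^ 2 := by
  intro w η hη
  have hNpos : (0 : ℝ) < N := by exact_mod_cast hN
  -- the inner products with `η` only see the block
  have hs : ∀ i, ∑ j, (w + η) j * z i j
      = ∑ j, w j * z i j + ∑ j ∈ B, η j * z i j := by
    intro i
    have h1 : ∑ j ∈ B, η j * z i j = ∑ j, η j * z i j :=
      Finset.sum_subset (Finset.subset_univ B) (fun j _ hj => by rw [hη j hj, zero_mul])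
    rw [h1, ← Finset.sum_add_distrib]
    exact Finset.sum_congr rfl (fun j _ => by rw [Pi.add_apply, add_mul])
  -- at most one active coordinate: the square of the sum is the sum of squares
  have hsq : ∀ i, (∑ j ∈ B, η j * z i j) ^ 2 = ∑ j ∈ B, η j ^ 2 * z i j := by
    intro i
    have e1 : ∑ j ∈ B, η j * z i j = ∑ j ∈ B.filter (fun j => z i j ≠ 0), η j * z i j := by
      symm
      apply Finset.sum_filter_of_ne
      intro j _ h h0
      exact h (by rw [h0, mul_zero])
    have e2 : ∑ j ∈ B, η j ^ 2 * z i j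
        = ∑ j ∈ B.filter (fun j => z i j ≠ 0), η j ^ 2 * z i j := by
      symm
      apply Finset.sum_filter_of_ne
      intro j _ h h0
      exact h (by rw [h0, mul_zero])
    rw [e1, e2]
    rcases Nat.le_one_iff_eq_zero_or_eq_one.mp (hone i) with h | h
    · rw [Finset.card_eq_zero.mp h]; simp
    · obtain ⟨a, ha⟩ := Finset.card_eq_one.mp h
      rw [ha, Finset.sum_singleton, Finset.sum_singleton]
      rcases hz01 i a with h0 | h0 <;> rw [h0] <;> ring
  have hcol' : ∀ j ∈ B, ∑ i, z i j ≤ ν * N := by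
    intro j hj
    refine le_trans (le_of_eq ?_) (hcol j hj)
    rw [Finset.card_filter]
    push_cast
    refine Finset.sum_congr rfl (fun i _ => ?_)
    rcases hz01 i j with h0 | h0 <;> simp [h0]
  have hquad : ∑ i, (∑ j ∈ B, η j * z i j) ^ 2 ≤ ν * N * ∑ j ∈ B, η j ^ 2 := by
    simp_rw [hsq]
    rw [Finset.sum_comm, Finset.mul_sum]
    refine Finset.sum_le_sum (fun j hj => ?_)
    rw [← Finset.mul_sum, mul_comm (ν * (N : ℝ))]
    exact mul_le_mul_of_nonneg_left (hcol' j hj) (sq_nonneg _)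
  have hlin : ∑ j ∈ B, grad w j * η j
      = (1 / (N : ℝ)) * ∑ i, deriv (L i) (∑ j', w j' * z i j') * ∑ j ∈ B, η j * z i j := by
    simp_rw [hgrad, Finset.mul_sum, Finset.sum_mul]
    rw [Finset.sum_comm]
    exact Finset.sum_congr rfl (fun i _ => Finset.sum_congr rfl (fun j _ => by ring))
  have hsum : ∑ i, L i (∑ j, (w + η) j * z i j)
      ≤ ∑ i, L i (∑ j, w j * z i j)
        + ∑ i, deriv (L i) (∑ j', w j' * z i j') * ∑ j ∈ B, η j * z i j
        + β / 2 * ∑ i, (∑ j ∈ B, η j * z i j) ^ 2 := by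
    rw [Finset.mul_sum, ← Finset.sum_add_distrib, ← Finset.sum_add_distrib]
    refine Finset.sum_le_sum (fun i _ => ?_)
    have h := hLsmooth i (∑ j, w j * z i j) (∑ j, (w + η) j * z i j)
    rw [hs i, add_sub_cancel_left] at h
    rw [hs i]
    exact h
  have hfin : ∑ i, L i (∑ j, (w + η) j * z i j) - ∑ i, L i (∑ j, w j * z i j)
      ≤ ∑ i, deriv (L i) (∑ j', w j' * z i j') * ∑ j ∈ B, η j * z i j
        + β / 2 * (ν * N * ∑ j ∈ B, η j ^ 2) := by
    have := mul_le_mul_of_nonneg_left hquad (by positivity : 0 ≤ β / 2)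
    linarith
  have hmul := mul_le_mul_of_nonneg_left hfin (by positivity : 0 ≤ 1 / (N : ℝ))
  rw [hLoss, hLoss, hlin, ← mul_sub]
  refine hmul.trans (le_of_eq ?_)
  rw [mul_add]
  congr 1
  field_simp
end

section
/- Let N, D be positive integers, β > 0, ν > 0 and λ ≥ 0. Let z_1, …, z_N ∈ ℝ^D with all entries in {0,1}, and let B ⊆ {1,…,D} be a block of coordinates such that (i) each sample z_i has at most one nonzero coordinate with index in B, and (ii) for every j ∈ B, the number of samples i with z_{ij} = 1 is at most ν·N. Let L_1, …, L_N : ℝ → ℝ be differentiable functions satisfying L_i(b) ≤ L_i(a) + L_i'(a)·(b − a) + (β/2)·(b − a)² for all a, b ∈ ℝ, define Loss(w) = (1/N)∑_{i=1}^N L_i(⟨w, z_i⟩) and F(w) = λ‖w‖₁ + Loss(w). Let S_λ(t) = sign(t)·max(|t| − λ, 0). Then for every w ∈ ℝ^D with w_j = 0 for all j ∈ B, there exists η ∈ ℝ^D supported on B such that F(w + η) − F(w) ≤ −(1/(2βν))·∑_{j∈B} S_λ((∂Loss/∂w_j)(w))². -/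
open Finset in
/-- Per-iteration progress bound (inequality (13)) of Fully Corrective
Randomized Block Coordinate Descent: adding a fresh block `B` of Random
Binning features (on which the current iterate is zero) and minimizing over it
decreases the L1-regularized objective by at least
`(1/(2βν)) ∑_{j∈B} S_λ(∇_j Loss(w))²`. -/
theorem stmt_6 (N D : ℕ) (hN : 0 < N) (hD : 0 < D) (β ν lam : ℝ)
    (hβ : 0 < β) (hν : 0 < ν) (hlam : 0 ≤ lam)
    (z : Fin N → Fin D → ℝ)
    (hz01 : ∀ i j, z i j = 0 ∨ z i j = 1)
    (B : Finset (Fin D))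
    (hone : ∀ i, (B.filter (fun j => z i j ≠ 0)).card ≤ 1)
    (hcol : ∀ j ∈ B, ((univ.filter (fun i : Fin N => z i j = 1)).card : ℝ) ≤ ν * N)
    (L : Fin N → ℝ → ℝ)
    (hLdiff : ∀ i, Differentiable ℝ (L i))
    (hLsmooth : ∀ i a b, L i b ≤ L i a + deriv (L i) a * (b - a) + β / 2 * (b - a) ^ 2)
    (Loss : (Fin D → ℝ) → ℝ)
    (hLoss : ∀ w, Loss w = (1 / (N : ℝ)) * ∑ i, L i (∑ j, w j * z i j))
    (grad : (Fin D → ℝ) → Fin D → ℝ)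
    (hgrad : ∀ w j, grad w j = (1 / (N : ℝ)) * ∑ i, deriv (L i) (∑ j', w j' * z i j') * z i j)
    (F : (Fin D → ℝ) → ℝ)
    (hF : ∀ w, F w = lam * ∑ j, |w j| + Loss w)
    (S : ℝ → ℝ → ℝ) (hS : ∀ l t, S l t = Real.sign t * max (|t| - l) 0) :
    ∀ w : Fin D → ℝ, (∀ j ∈ B, w j = 0) →
      ∃ η : Fin D → ℝ, (∀ j ∉ B, η j = 0) ∧
        F (w + η) - F w ≤ -(1 / (2 * β * ν)) * ∑ j ∈ B, (S lam (grad w j)) ^ 2 := by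
  intro w hw
  have hN' : (0 : ℝ) < N := by exact_mod_cast hN
  have hbv : 0 < β * ν := mul_pos hβ hν
  obtain ⟨η, hη⟩ : ∃ η : Fin D → ℝ, η = fun j => if j ∈ B then -(S lam (grad w j)) / (β * ν) else 0 :=
    ⟨_, rfl⟩
  have hoff : ∀ j ∉ B, η j = 0 := by
    intro j hj; rw [hη]; simp [hj]
  have hon : ∀ j ∈ B, η j = -(S lam (grad w j)) / (β * ν) := by
    intro j hj; rw [hη]; simp [hj]
  refine ⟨η, hoff, ?_⟩
  have hsub : ∀ f : Fin D → ℝ, (∀ j ∉ B, f j = 0) → ∑ j, f j = ∑ j ∈ B, f j := by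
    intro f hf
    exact (Finset.sum_subset (Finset.subset_univ B) (fun j _ hj => hf j hj)).symm
  -- the L1 norm splits
  have habs : ∑ j, |(w + η) j| = ∑ j, |w j| + ∑ j ∈ B, |η j| := by
    rw [← hsub (fun j => |η j|) (fun j hj => by simp [hoff j hj]), ← Finset.sum_add_distrib]
    refine Finset.sum_congr rfl fun j _ => ?_
    by_cases hj : j ∈ B
    · simp [hw j hj]
    · simp [hoff j hj]
  -- the inner product splits
  have hin : ∀ i, ∑ j, (w + η) j * z i j = ∑ j, w j * z i j + ∑ j ∈ B, η j * z i j := by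
    intro i
    rw [← hsub (fun j => η j * z i j) (fun j hj => by simp [hoff j hj]), ← Finset.sum_add_distrib]
    refine Finset.sum_congr rfl fun j _ => ?_
    simp [add_mul]
  have hsq : ∀ i, (∑ j ∈ B, η j * z i j) ^ 2 = ∑ j ∈ B, η j ^ 2 * z i j := by
    intro i
    by_cases h : ∃ j0 ∈ B, z i j0 ≠ 0
    · obtain ⟨j0, hj0, hz0⟩ := h
      have huniq : ∀ j ∈ B, j ≠ j0 → z i j = 0 := by
        intro j hj hne
        by_contra hzj
        exact hne (Finset.card_le_one.mp (hone i) j (by simp [hj, hzj]) j0 (by simp [hj0, hz0]))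
      rw [Finset.sum_eq_single_of_mem j0 hj0 (fun j hj hne => by simp [huniq j hj hne]),
        Finset.sum_eq_single_of_mem j0 hj0 (fun j hj hne => by simp [huniq j hj hne])]
      rcases hz01 i j0 with h | h
      · exact absurd h hz0
      · simp [h]
    · push Not at h
      rw [Finset.sum_eq_zero (fun j hj => by simp [h j hj]),
        Finset.sum_eq_zero (fun j hj => by simp [h j hj])]
      simp
  have hcount : ∀ j ∈ B, ∑ i, z i j ≤ ν * N := by
    intro j hj
    refine le_trans (le_of_eq ?_) (hcol j hj)
    rw [Finset.card_filter]
    push_cast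
    refine Finset.sum_congr rfl fun i _ => ?_
    rcases hz01 i j with h | h <;> simp [h]
  have hloss : Loss (w + η) - Loss w ≤ ∑ j ∈ B, (grad w j * η j + β * ν / 2 * η j ^ 2) := by
    have h1 : ∑ i, L i (∑ j, (w + η) j * z i j) ≤ ∑ i, (L i (∑ j, w j * z i j)
        + deriv (L i) (∑ j, w j * z i j) * (∑ j ∈ B, η j * z i j)
        + β / 2 * ∑ j ∈ B, η j ^ 2 * z i j) := by
      refine Finset.sum_le_sum fun i _ => ?_
      have := hLsmooth i (∑ j, w j * z i j) (∑ j, (w + η) j * z i j)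
      rwa [hin i, add_sub_cancel_left, hsq i] at *
    rw [Finset.sum_add_distrib, Finset.sum_add_distrib] at h1
    have h2 : ∑ i, deriv (L i) (∑ j, w j * z i j) * (∑ j ∈ B, η j * z i j)
        = N * ∑ j ∈ B, grad w j * η j := by
      simp_rw [Finset.mul_sum]
      rw [Finset.sum_comm]
      refine Finset.sum_congr rfl fun j _ => ?_
      rw [hgrad w j, ← mul_assoc, ← mul_assoc, mul_one_div_cancel hN'.ne', one_mul, Finset.sum_mul]
      refine Finset.sum_congr rfl fun i _ => ?_
      ring
    have h3 : ∑ i, β / 2 * ∑ j ∈ B, η j ^ 2 * z i j ≤ N * ∑ j ∈ B, β * ν / 2 * η j ^ 2 := by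
      rw [← Finset.mul_sum, Finset.sum_comm, Finset.mul_sum, Finset.mul_sum]
      refine Finset.sum_le_sum fun j hj => ?_
      rw [← Finset.mul_sum]
      have := mul_le_mul_of_nonneg_left (hcount j hj) (show 0 ≤ β / 2 * η j ^ 2 by positivity)
      nlinarith [this]
    rw [hLoss, hLoss, Finset.sum_add_distrib, ← mul_sub, one_div, inv_mul_le_iff₀ hN', mul_add]
    linarith
  have hcoord : ∀ j ∈ B, lam * |η j| + (grad w j * η j + β * ν / 2 * η j ^ 2)
      = -(1 / (2 * β * ν)) * (S lam (grad w j)) ^ 2 := by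
    intro j hj
    have key : lam * |S lam (grad w j)| - grad w j * S lam (grad w j) = -(S lam (grad w j)) ^ 2 := by
      rw [hS]
      generalize grad w j = g
      rcases le_total (|g| - lam) 0 with h | h
      · simp [max_eq_right h]
      · rw [max_eq_left h]
        rcases lt_trichotomy g 0 with hg | hg | hg
        · rw [Real.sign_of_neg hg, abs_mul, abs_of_nonneg h, abs_of_neg hg]; simp; ring
        · simp [hg]
        · rw [Real.sign_of_pos hg, abs_mul, abs_of_nonneg h, abs_of_pos hg]; simp; ring
    rw [hon j hj, abs_div, abs_neg, abs_of_pos hbv]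
    generalize S lam (grad w j) = s at *
    have e : lam * (|s| / (β * ν)) + (grad w j * (-s / (β * ν)) + β * ν / 2 * (-s / (β * ν)) ^ 2)
      = (lam * |s| - grad w j * s) / (β * ν) + s ^ 2 / (2 * (β * ν)) := by
      field_simp
      ring
    rw [e, key]
    field_simp
    ring
  have hsum := Finset.sum_congr rfl hcoord
  rw [Finset.sum_add_distrib, ← Finset.mul_sum, ← Finset.mul_sum] at hsum
  rw [hF, hF, habs, ← hsum, mul_add]
  linarith
end

section
/- Let x₁, x₂ ∈ ℝ and δ > 0. Then the Lebesgue measure of the set {u ∈ [0, δ] : ⌊(x₁ − u)/δ⌋ = ⌊(x₂ − u)/δ⌋} equals δ·max(1 − |x₁ − x₂|/δ, 0). Equivalently, if u is drawn uniformly from [0, δ], the probability that x₁ and x₂ fall in the same bin of the one-dimensional grid with width δ and bias u is max(1 − |x₁ − x₂|/δ, 0). -/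
open MeasureTheory in
lemma aux_le (x₁ x₂ δ : ℝ) (hδ : 0 < δ) (h : x₁ ≤ x₂) :
    volume {u : ℝ | u ∈ Set.Icc 0 δ ∧ ⌊(x₁ - u) / δ⌋ = ⌊(x₂ - u) / δ⌋} =
      ENNReal.ofReal (δ * max (1 - |x₁ - x₂| / δ) 0) := by
  have hfl : ∀ (y : ℝ) (n : ℤ), ⌊y / δ⌋ = n ↔ n * δ ≤ y ∧ y < n * δ + δ := by
    intro y n
    rw [Int.floor_eq_iff, le_div_iff₀ hδ, div_lt_iff₀ hδ, add_mul, one_mul]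
  have hR : δ * max (1 - |x₁ - x₂| / δ) 0 = max (δ - (x₂ - x₁)) 0 := by
    rw [abs_sub_comm, abs_of_nonneg (sub_nonneg.2 h), mul_max_of_nonneg _ _ hδ.le]
    congr 1
    · field_simp
    · simp
  rw [hR]
  obtain ⟨k, hk⟩ : ∃ k : ℤ, ⌊x₁ / δ⌋ = k := ⟨_, rfl⟩
  obtain ⟨h1, h2⟩ := (hfl _ _).1 hk
  have key : ∀ u ∈ Set.Icc 0 δ, (⌊(x₁ - u) / δ⌋ = ⌊(x₂ - u) / δ⌋ ↔
      (u ≤ x₁ - k * δ ∧ x₂ - k * δ - δ < u) ∨ (x₂ - k * δ < u)) := by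
    rintro u ⟨hu0, hu1⟩
    rcases le_or_gt u (x₁ - k * δ) with hu | hu
    · have e : ⌊(x₁ - u) / δ⌋ = k := (hfl _ _).2 ⟨by linarith, by linarith⟩
      rw [e, eq_comm, hfl]
      constructor
      · rintro ⟨a, b⟩
        left; constructor <;> linarith
      · rintro (⟨a, b⟩ | a) <;> constructor <;> linarith
    · have e : ⌊(x₁ - u) / δ⌋ = k - 1 :=
        (hfl _ _).2 ⟨by push_cast; linarith, by push_cast; linarith⟩
      rw [e, eq_comm, hfl]
      push_cast
      constructor
      · rintro ⟨a, b⟩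
        right; linarith
      · rintro (⟨a, b⟩ | a) <;> constructor <;> linarith
  rcases lt_or_ge (x₂ - k * δ) δ with hs | hs
  · have : {u : ℝ | u ∈ Set.Icc 0 δ ∧ ⌊(x₁ - u) / δ⌋ = ⌊(x₂ - u) / δ⌋} =
        Set.Icc 0 (x₁ - k * δ) ∪ Set.Ioc (x₂ - k * δ) δ := by
      ext u
      simp only [Set.mem_setOf_eq, Set.mem_union]
      constructor
      · rintro ⟨hu, hh⟩
        rcases (key u hu).1 hh with ⟨a, b⟩ | a
        · exact Or.inl ⟨hu.1, a⟩
        · exact Or.inr ⟨a, hu.2⟩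
      · rintro (⟨a, b⟩ | ⟨a, b⟩)
        · have hu : u ∈ Set.Icc 0 δ := ⟨a, by linarith⟩
          exact ⟨hu, (key u hu).2 (Or.inl ⟨b, by linarith⟩)⟩
        · have hu : u ∈ Set.Icc 0 δ := ⟨by linarith, b⟩
          exact ⟨hu, (key u hu).2 (Or.inr a)⟩
    rw [this, measure_union _ measurableSet_Ioc, Real.volume_Icc, Real.volume_Ioc,
      ← ENNReal.ofReal_add (by linarith) (by linarith), max_eq_left (by linarith)]
    · congr 1; ring
    · rw [Set.disjoint_left]
      rintro u ⟨_, a⟩ ⟨b, _⟩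
      linarith
  · have : {u : ℝ | u ∈ Set.Icc 0 δ ∧ ⌊(x₁ - u) / δ⌋ = ⌊(x₂ - u) / δ⌋} =
        Set.Ioc (x₂ - k * δ - δ) (x₁ - k * δ) := by
      ext u
      simp only [Set.mem_setOf_eq]
      constructor
      · rintro ⟨hu, hh⟩
        rcases (key u hu).1 hh with ⟨a, b⟩ | a
        · exact ⟨b, a⟩
        · exact absurd hu.2 (by linarith)
      · rintro ⟨a, b⟩
        have hu : u ∈ Set.Icc 0 δ := ⟨by linarith, by linarith⟩
        exact ⟨hu, (key u hu).2 (Or.inl ⟨b, a⟩)⟩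
    rw [this, Real.volume_Ioc, ENNReal.ofReal_max, ENNReal.ofReal_zero, max_eq_left (zero_le)]
    congr 1; ring


/-- One-dimensional Random Binning collision probability: the Lebesgue measure
of biases `u ∈ [0, δ]` for which `x₁` and `x₂` get the same bin index
`⌊(x − u)/δ⌋` equals `δ · max(1 − |x₁ − x₂|/δ, 0)`. -/
theorem stmt_7 (x₁ x₂ δ : ℝ) (hδ : 0 < δ) :
    MeasureTheory.volume
        {u : ℝ | u ∈ Set.Icc 0 δ ∧ ⌊(x₁ - u) / δ⌋ = ⌊(x₂ - u) / δ⌋} =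
      ENNReal.ofReal (δ * max (1 - |x₁ - x₂| / δ) 0) := by


  rcases le_total x₁ x₂ with h | h
  · exact aux_le x₁ x₂ δ hδ h
  · rw [abs_sub_comm, ← aux_le x₂ x₁ δ hδ h]
    simp only [eq_comm]
end

section
/- Let k : (0, ∞) → ℝ be twice continuously differentiable with k''(δ) ≥ 0 for all δ > 0, and suppose lim_{δ→∞} k(δ) = 0 and lim_{δ→∞} δ·k'(δ) = 0. Then for every Δ > 0, the integral ∫_Δ^∞ (δ − Δ)·k''(δ) dδ converges and equals k(Δ). Equivalently, ∫_0^∞ δ·k''(δ)·max(1 − Δ/δ, 0) dδ = k(Δ). -/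
open MeasureTheory Filter in
/-- Width-distribution identity: for a kernel component `k` with nonnegative
second derivative vanishing suitably at infinity,
`∫_Δ^∞ (δ − Δ) k''(δ) dδ = k(Δ)`, equivalently
`∫_0^∞ δ k''(δ) max(1 − Δ/δ, 0) dδ = k(Δ)`. -/
theorem stmt_8 (k : ℝ → ℝ)
    (hC2 : ContDiffOn ℝ 2 k (Set.Ioi 0))
    (hconv : ∀ δ ∈ Set.Ioi (0 : ℝ), 0 ≤ deriv (deriv k) δ)
    (hk0 : Tendsto k atTop (nhds 0))
    (hk1 : Tendsto (fun δ => δ * deriv k δ) atTop (nhds 0)) :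
    ∀ Δ : ℝ, 0 < Δ →
      IntegrableOn (fun δ => (δ - Δ) * deriv (deriv k) δ) (Set.Ioi Δ) ∧
      (∫ δ in Set.Ioi Δ, (δ - Δ) * deriv (deriv k) δ) = k Δ ∧
      (∫ δ in Set.Ioi (0 : ℝ), δ * deriv (deriv k) δ * max (1 - Δ / δ) 0) = k Δ := by
  intro Δ hΔ
  have hd1 : ContDiffOn ℝ 1 (deriv k) (Set.Ioi 0) :=
    hC2.deriv_of_isOpen isOpen_Ioi (by norm_num)
  have h1 : ∀ x : ℝ, 0 < x → HasDerivAt k (deriv k x) x := fun x hx =>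
    ((hC2.differentiableOn (by norm_num)).differentiableAt (Ioi_mem_nhds hx)).hasDerivAt
  have h2 : ∀ x : ℝ, 0 < x → HasDerivAt (deriv k) (deriv (deriv k) x) x := fun x hx =>
    ((hd1.differentiableOn (by norm_num)).differentiableAt (Ioi_mem_nhds hx)).hasDerivAt
  have hk' : Tendsto (deriv k) atTop (nhds 0) := by
    have h := hk1.mul tendsto_inv_atTop_zero
    rw [mul_zero] at h
    refine h.congr' ?_
    filter_upwards [eventually_gt_atTop (0 : ℝ)] with x hx
    field_simp
  have hg : Tendsto (fun x => (x - Δ) * deriv k x - k x) atTop (nhds 0) := by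
    have h := (hk1.sub (hk'.const_mul Δ)).sub hk0
    simp only [mul_zero, sub_zero] at h
    refine h.congr fun x => ?_
    ring
  have hderiv : ∀ x ∈ Set.Ici Δ, HasDerivAt (fun x => (x - Δ) * deriv k x - k x)
      ((x - Δ) * deriv (deriv k) x) x := by
    intro x hx
    have hx0 : 0 < x := lt_of_lt_of_le hΔ hx
    have h := (((hasDerivAt_id x).sub_const Δ).mul (h2 x hx0)).sub (h1 x hx0)
    exact h.congr_deriv (by simp)
  have hpos : ∀ x ∈ Set.Ioi Δ, 0 ≤ (x - Δ) * deriv (deriv k) x := fun x hx =>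
    mul_nonneg (sub_nonneg.2 (le_of_lt hx)) (hconv x (lt_trans hΔ hx))
  have hint : (∫ δ in Set.Ioi Δ, (δ - Δ) * deriv (deriv k) δ) = k Δ := by
    rw [integral_Ioi_of_hasDerivAt_of_nonneg' hderiv hpos hg]
    simp
  refine ⟨integrableOn_Ioi_deriv_of_nonneg' hderiv hpos hg, hint, ?_⟩
  have heq : Set.EqOn (fun δ => δ * deriv (deriv k) δ * max (1 - Δ / δ) 0)
      ((Set.Ioi Δ).indicator fun δ => (δ - Δ) * deriv (deriv k) δ) (Set.Ioi 0) := by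
    intro x hx
    have hx0 : 0 < x := hx
    by_cases h : Δ < x
    · rw [Set.indicator_of_mem (Set.mem_Ioi.2 h)]
      have : 0 ≤ 1 - Δ / x := sub_nonneg.2 ((div_le_one hx0).2 h.le)
      simp only [max_eq_left this]
      field_simp
    · rw [Set.indicator_of_notMem (by simpa using h)]
      have : 1 - Δ / x ≤ 0 := sub_nonpos.2 ((one_le_div hx0).2 (not_lt.1 h))
      simp only [max_eq_right this, mul_zero]
  rw [setIntegral_congr_fun measurableSet_Ioi heq, setIntegral_indicator measurableSet_Ioi,
    Set.inter_eq_right.2 (Set.Ioi_subset_Ioi hΔ.le), hint]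
end

section
/- Let d be a positive integer, x, y ∈ ℝ^d and δ₁, …, δ_d > 0. Then the measure, with respect to the product of the uniform distributions on [0, δ_j] for j = 1, …, d, of the set {u ∈ ∏_{j=1}^d [0, δ_j] : ⌊(x_j − u_j)/δ_j⌋ = ⌊(y_j − u_j)/δ_j⌋ for all j} equals ∏_{j=1}^d max(1 − |x_j − y_j|/δ_j, 0). -/
open MeasureTheory in
lemma floor_div_iff_aux (t δ : ℝ) (hδ : 0 < δ) (n : ℤ) :
    ⌊t / δ⌋ = n ↔ n * δ ≤ t ∧ t < n * δ + δ := by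
  rw [Int.floor_eq_iff, le_div_iff₀ hδ, div_lt_iff₀ hδ, add_mul, one_mul]

open MeasureTheory in
lemma vol_aux (x y δ : ℝ) (hδ : 0 < δ) (hxy : x ≤ y) :
    volume {u : ℝ | u ∈ Set.Icc 0 δ ∧ ⌊(x - u) / δ⌋ = ⌊(y - u) / δ⌋} =
      ENNReal.ofReal (δ - (y - x)) := by
  obtain ⟨n, hn⟩ : ∃ n : ℤ, ⌊x / δ⌋ = n := ⟨_, rfl⟩
  rw [floor_div_iff_aux x δ hδ] at hn
  obtain ⟨h1, h2⟩ := hn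
  have key : ∀ u ∈ Set.Icc 0 δ, (⌊(x - u) / δ⌋ = ⌊(y - u) / δ⌋ ↔
      (u ≤ x - n * δ ∧ y - n * δ - δ < u) ∨ (y - n * δ < u)) := by
    rintro u ⟨hu0, hu1⟩
    by_cases hu : u ≤ x - n * δ
    · have : ⌊(x - u) / δ⌋ = n := (floor_div_iff_aux _ δ hδ n).2 ⟨by linarith, by linarith⟩
      rw [this, eq_comm, floor_div_iff_aux _ δ hδ]
      constructor
      · rintro ⟨a, b⟩
        exact Or.inl ⟨hu, by linarith⟩
      · rintro (⟨a, b⟩ | a)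
        · exact ⟨by linarith, by linarith⟩
        · exact ⟨by linarith, by linarith⟩
    · push Not at hu
      have : ⌊(x - u) / δ⌋ = n - 1 := (floor_div_iff_aux _ δ hδ (n - 1)).2 (by
        push_cast; exact ⟨by linarith, by linarith⟩)
      rw [this, eq_comm, floor_div_iff_aux _ δ hδ]
      push_cast
      constructor
      · rintro ⟨a, b⟩
        exact Or.inr (by linarith)
      · rintro (⟨a, b⟩ | a)
        · linarith
        · exact ⟨by linarith, by linarith⟩
  by_cases hc : y - n * δ < δ
  · have : {u : ℝ | u ∈ Set.Icc 0 δ ∧ ⌊(x - u) / δ⌋ = ⌊(y - u) / δ⌋} =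
        Set.Icc 0 (x - n * δ) ∪ Set.Ioc (y - n * δ) δ := by
      ext u
      simp only [Set.mem_setOf_eq, Set.mem_union, Set.mem_Icc, Set.mem_Ioc]
      constructor
      · rintro ⟨hu, h⟩
        rcases (key u hu).1 h with h | h
        · exact Or.inl ⟨hu.1, h.1⟩
        · exact Or.inr ⟨h, hu.2⟩
      · rintro (⟨a, b⟩ | ⟨a, b⟩)
        · have hu : u ∈ Set.Icc 0 δ := ⟨a, by linarith⟩
          exact ⟨hu, (key u hu).2 (Or.inl ⟨b, by linarith⟩)⟩
        · have hu : u ∈ Set.Icc 0 δ := ⟨by linarith, b⟩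
          exact ⟨hu, (key u hu).2 (Or.inr a)⟩
    rw [this, measure_union _ measurableSet_Ioc, Real.volume_Icc, Real.volume_Ioc,
      ← ENNReal.ofReal_add (by linarith) (by linarith)]
    · congr 1; ring
    · rw [Set.disjoint_left]
      rintro u ⟨a, b⟩ ⟨c, e⟩
      linarith
  · push Not at hc
    have : {u : ℝ | u ∈ Set.Icc 0 δ ∧ ⌊(x - u) / δ⌋ = ⌊(y - u) / δ⌋} =
        Set.Ioc (y - n * δ - δ) (x - n * δ) := by
      ext u
      simp only [Set.mem_setOf_eq, Set.mem_Ioc]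
      constructor
      · rintro ⟨hu, h⟩
        rcases (key u hu).1 h with h | h
        · exact ⟨h.2, h.1⟩
        · linarith [hu.2]
      · rintro ⟨a, b⟩
        have hu : u ∈ Set.Icc 0 δ := ⟨by linarith, by linarith⟩
        exact ⟨hu, (key u hu).2 (Or.inl ⟨b, a⟩)⟩
    rw [this, Real.volume_Ioc]
    congr 1; ring

open MeasureTheory in
lemma vol_abs_aux (x y δ : ℝ) (hδ : 0 < δ) :
    volume {u : ℝ | u ∈ Set.Icc 0 δ ∧ ⌊(x - u) / δ⌋ = ⌊(y - u) / δ⌋} =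
      ENNReal.ofReal (δ - |x - y|) := by
  rcases le_total x y with h | h
  · rw [vol_aux x y δ hδ h, abs_of_nonpos (by linarith)]
    congr 1; ring
  · rw [abs_of_nonneg (by linarith), ← vol_aux y x δ hδ h]
    simp only [eq_comm]


open MeasureTheory in
/-- Multi-dimensional Random Binning collision probability: with per-coordinate
biases drawn independently and uniformly from `[0, δ_j]`, the probability that
all coordinate-wise bin indices of `x` and `y` agree factorizes into
`∏_j max(1 − |x_j − y_j|/δ_j, 0)`. -/
theorem stmt_10 (d : ℕ) (hd : 0 < d) (x y : Fin d → ℝ) (δ : Fin d → ℝ)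
    (hδ : ∀ j, 0 < δ j)
    (unif : Fin d → Measure ℝ)
    (hunif : ∀ j, unif j =
      (MeasureTheory.volume (Set.Icc (0 : ℝ) (δ j)))⁻¹ •
        MeasureTheory.volume.restrict (Set.Icc (0 : ℝ) (δ j))) :
    Measure.pi unif
        {u : Fin d → ℝ | u ∈ Set.univ.pi (fun j => Set.Icc (0 : ℝ) (δ j)) ∧
          ∀ j, ⌊(x j - u j) / δ j⌋ = ⌊(y j - u j) / δ j⌋} =
      ENNReal.ofReal (∏ j, max (1 - |x j - y j| / δ j) 0) := by
  have hset : {u : Fin d → ℝ | u ∈ Set.univ.pi (fun j => Set.Icc (0 : ℝ) (δ j)) ∧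
          ∀ j, ⌊(x j - u j) / δ j⌋ = ⌊(y j - u j) / δ j⌋} =
      Set.univ.pi (fun j => {u : ℝ | u ∈ Set.Icc 0 (δ j) ∧
        ⌊(x j - u) / δ j⌋ = ⌊(y j - u) / δ j⌋}) := by
    ext u
    simp only [Set.mem_setOf_eq, Set.mem_pi, Set.mem_univ, true_imp_iff, forall_and]
  have hfin : ∀ j, IsFiniteMeasure (unif j) := by
    intro j
    rw [hunif j]
    refine ⟨?_⟩
    rw [Measure.smul_apply, Measure.restrict_apply_univ, Real.volume_Icc, smul_eq_mul]
    refine ENNReal.mul_lt_top ?_ ENNReal.ofReal_lt_top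
    rw [ENNReal.inv_lt_top, ENNReal.ofReal_pos]
    linarith [hδ j]
  rw [hset, Measure.pi_pi, ENNReal.ofReal_prod_of_nonneg (fun j _ => le_max_right _ _)]
  refine Finset.prod_congr rfl fun j _ => ?_
  have hp := hδ j
  rw [hunif j, Measure.smul_apply, Measure.restrict_eq_self _ (fun u hu => hu.1),
    vol_abs_aux _ _ _ hp, Real.volume_Icc, smul_eq_mul, sub_zero,
    ← ENNReal.ofReal_inv_of_pos hp, ← ENNReal.ofReal_mul (inv_nonneg.2 hp.le),
    ENNReal.ofReal_max, ENNReal.ofReal_zero, max_eq_left (zero_le)]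
  congr 1
  field_simp
end
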